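/- arXiv:0801.0300 — 4 statements merged into one kernel-verified Lean document; each statement's English description precedes it below -/
import Mathlib

section
/- (Non-metrisability of Painlevé I) Let A₀(x,y) = 6y² + x and A₁ = A₂ = A₃ = 0. Then every smooth solution (ψ₁,ψ₂,ψ₃) of the Liouville linear system on any connected open set U ⊆ ℝ² satisfies ψ₂ ≡ 0 and ψ₃ ≡ 0 on U; in particular ψ₁ψ₃ − ψ₂² vanishes identically, so there is no solution of the Liouville system that is nondegenerate at any point. -/
/-!
Write `A = 6y² + x` and subscripts for partial derivatives. The system reads
`ψ₁ₓ = -2Aψ₂`, `ψ₃_y = 0`, `ψ₁_y + 2ψ₂ₓ = -2Aψ₃`, `ψ₃ₓ + 2ψ₂_y = 0`.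
Equality of the mixed derivatives of `ψ₁` eliminates `ψ₁` and leaves
`2ψ₂ₓₓ + 2ψ₃ + 3Aψ₃ₓ - 24yψ₂ = 0`.
Since `ψ₃ₓ_y = 0` and `ψ₂_yy = 0`, the left-hand side is quadratic in `y`, and differentiating
twice in `y` gives `60ψ₃ₓ = 0`. Hence `ψ₂_y = 0`; the first `y`-derivative of the relation then
gives `ψ₂ = 0`, and the relation itself gives `ψ₃ = 0`.

All identities hold pointwise on the open set `U` and are differentiated there; the calculus
needed is that `pdx`, `pdy` preserve smoothness on `U`, commute (`pdx_pdy_comm`) and depend only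
on the values on `U` (`pdx_congr`, `pdy_congr`).
-/

noncomputable section

open Matrix

/-- Partial derivative in the first (x) variable. -/
def pdx (f : ℝ × ℝ → ℝ) : ℝ × ℝ → ℝ :=
  fun p => deriv (fun t => f (t, p.2)) p.1

/-- Partial derivative in the second (y) variable. -/
def pdy (f : ℝ × ℝ → ℝ) : ℝ × ℝ → ℝ :=
  fun p => deriv (fun t => f (p.1, t)) p.2

/-- `pd 0 = ∂ₓ`, `pd 1 = ∂_y`. -/
def pd : Fin 2 → (ℝ × ℝ → ℝ) → (ℝ × ℝ → ℝ) := ![pdx, pdy]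

/-- The Liouville linear system associated to `(A0, A1, A2, A3)`, holding on `U`. -/
def LiouvilleSystem (U : Set (ℝ × ℝ)) (A0 A1 A2 A3 ψ1 ψ2 ψ3 : ℝ × ℝ → ℝ) : Prop :=
  ∀ p ∈ U,
    pdx ψ1 p = (2/3) * A1 p * ψ1 p - 2 * A0 p * ψ2 p ∧
    pdy ψ3 p = 2 * A3 p * ψ2 p - (2/3) * A2 p * ψ3 p ∧
    pdy ψ1 p + 2 * pdx ψ2 p
      = (4/3) * A2 p * ψ1 p - (2/3) * A1 p * ψ2 p - 2 * A0 p * ψ3 p ∧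
    pdx ψ3 p + 2 * pdy ψ2 p
      = 2 * A3 p * ψ1 p - (4/3) * A1 p * ψ3 p + (2/3) * A2 p * ψ2 p

/-- `(A0, A1, A2, A3)` is metrisable near `p` (within `U`). -/
def MetrisableNear (U : Set (ℝ × ℝ)) (A0 A1 A2 A3 : ℝ × ℝ → ℝ) (p : ℝ × ℝ) : Prop :=
  ∃ V : Set (ℝ × ℝ), IsOpen V ∧ p ∈ V ∧ V ⊆ U ∧
    ∃ E F G : ℝ × ℝ → ℝ,
      ContDiffOn ℝ (⊤ : ℕ∞) E V ∧ ContDiffOn ℝ (⊤ : ℕ∞) F V ∧ ContDiffOn ℝ (⊤ : ℕ∞) G V ∧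
      (∀ q ∈ V, E q * G q - (F q) ^ 2 ≠ 0) ∧
      (∀ q ∈ V,
        A0 q = (E q * pdy E q - 2 * E q * pdx F q + F q * pdx E q)
                 / (2 * (E q * G q - (F q) ^ 2)) ∧
        A1 q = (3 * F q * pdy E q + G q * pdx E q - 2 * F q * pdx F q - 2 * E q * pdx G q)
                 / (2 * (E q * G q - (F q) ^ 2)) ∧
        A2 q = (2 * F q * pdy F q + 2 * G q * pdy E q - 3 * F q * pdx G q - E q * pdy G q)
                 / (2 * (E q * G q - (F q) ^ 2)) ∧
        A3 q = (2 * G q * pdy F q - G q * pdx G q - F q * pdy G q)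
                 / (2 * (E q * G q - (F q) ^ 2)))

end

section Calculus

variable {U : Set (ℝ × ℝ)} {f g : ℝ × ℝ → ℝ} {p : ℝ × ℝ}

lemma hasDerivAt_slice_x (hU : IsOpen U) (hf : ContDiffOn ℝ (⊤ : ℕ∞) f U) (hp : p ∈ U) :
    HasDerivAt (fun t => f (t, p.2)) (fderiv ℝ f p (1, 0)) p.1 := by
  have h : HasFDerivAt f (fderiv ℝ f p) (p.1, p.2) :=
    ((hf.contDiffAt (hU.mem_nhds hp)).differentiableAt (by simp)).hasFDerivAt
  exact h.comp_hasDerivAt p.1 ((hasDerivAt_id p.1).prodMk (hasDerivAt_const p.1 p.2))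

lemma hasDerivAt_slice_y (hU : IsOpen U) (hf : ContDiffOn ℝ (⊤ : ℕ∞) f U) (hp : p ∈ U) :
    HasDerivAt (fun t => f (p.1, t)) (fderiv ℝ f p (0, 1)) p.2 := by
  have h : HasFDerivAt f (fderiv ℝ f p) (p.1, p.2) :=
    ((hf.contDiffAt (hU.mem_nhds hp)).differentiableAt (by simp)).hasFDerivAt
  exact h.comp_hasDerivAt p.2 ((hasDerivAt_const p.2 p.1).prodMk (hasDerivAt_id p.2))

lemma pdx_eq_fderiv (hU : IsOpen U) (hf : ContDiffOn ℝ (⊤ : ℕ∞) f U) (hp : p ∈ U) :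
    pdx f p = fderiv ℝ f p (1, 0) :=
  (hasDerivAt_slice_x hU hf hp).deriv

lemma pdy_eq_fderiv (hU : IsOpen U) (hf : ContDiffOn ℝ (⊤ : ℕ∞) f U) (hp : p ∈ U) :
    pdy f p = fderiv ℝ f p (0, 1) :=
  (hasDerivAt_slice_y hU hf hp).deriv

lemma hasDerivAt_pdx (hU : IsOpen U) (hf : ContDiffOn ℝ (⊤ : ℕ∞) f U) (hp : p ∈ U) :
    HasDerivAt (fun t => f (t, p.2)) (pdx f p) p.1 := by
  rw [pdx_eq_fderiv hU hf hp]
  exact hasDerivAt_slice_x hU hf hp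

lemma hasDerivAt_pdy (hU : IsOpen U) (hf : ContDiffOn ℝ (⊤ : ℕ∞) f U) (hp : p ∈ U) :
    HasDerivAt (fun t => f (p.1, t)) (pdy f p) p.2 := by
  rw [pdy_eq_fderiv hU hf hp]
  exact hasDerivAt_slice_y hU hf hp

lemma contDiffOn_pdx (hU : IsOpen U) (hf : ContDiffOn ℝ (⊤ : ℕ∞) f U) :
    ContDiffOn ℝ (⊤ : ℕ∞) (pdx f) U :=
  ((hf.fderiv_of_isOpen hU (by simp)).clm_apply contDiffOn_const).congr
    fun _ hq => pdx_eq_fderiv hU hf hq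

lemma contDiffOn_pdy (hU : IsOpen U) (hf : ContDiffOn ℝ (⊤ : ℕ∞) f U) :
    ContDiffOn ℝ (⊤ : ℕ∞) (pdy f) U :=
  ((hf.fderiv_of_isOpen hU (by simp)).clm_apply contDiffOn_const).congr
    fun _ hq => pdy_eq_fderiv hU hf hq

lemma eventuallyEq_slice_x (hU : IsOpen U) (h : ∀ q ∈ U, f q = g q) (hp : p ∈ U) :
    (fun t => f (t, p.2)) =ᶠ[nhds p.1] fun t => g (t, p.2) := by
  have hc : ContinuousAt (fun t : ℝ => (t, p.2)) p.1 := by fun_prop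
  filter_upwards [hc.preimage_mem_nhds (hU.mem_nhds hp)] with t ht using h _ ht

lemma eventuallyEq_slice_y (hU : IsOpen U) (h : ∀ q ∈ U, f q = g q) (hp : p ∈ U) :
    (fun t => f (p.1, t)) =ᶠ[nhds p.2] fun t => g (p.1, t) := by
  have hc : ContinuousAt (fun t : ℝ => (p.1, t)) p.2 := by fun_prop
  filter_upwards [hc.preimage_mem_nhds (hU.mem_nhds hp)] with t ht using h _ ht

lemma pdx_congr (hU : IsOpen U) (h : ∀ q ∈ U, f q = g q) (hp : p ∈ U) :
    pdx f p = pdx g p :=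
  (eventuallyEq_slice_x hU h hp).deriv_eq

lemma pdy_congr (hU : IsOpen U) (h : ∀ q ∈ U, f q = g q) (hp : p ∈ U) :
    pdy f p = pdy g p :=
  (eventuallyEq_slice_y hU h hp).deriv_eq

lemma pdx_eq_zero (hU : IsOpen U) (h : ∀ q ∈ U, f q = 0) (hp : p ∈ U) : pdx f p = 0 := by
  rw [pdx_congr (g := fun _ => 0) hU h hp]
  simp [pdx]

lemma pdy_eq_zero (hU : IsOpen U) (h : ∀ q ∈ U, f q = 0) (hp : p ∈ U) : pdy f p = 0 := by
  rw [pdy_congr (g := fun _ => 0) hU h hp]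
  simp [pdy]

/-- Symmetry of second partial derivatives, deduced from the symmetry of the second Fréchet
derivative. -/
lemma pdx_pdy_comm (hU : IsOpen U) (hf : ContDiffOn ℝ (⊤ : ℕ∞) f U) (hp : p ∈ U) :
    pdx (pdy f) p = pdy (pdx f) p := by
  have hd : DifferentiableAt ℝ (fderiv ℝ f) p :=
    ((hf.fderiv_of_isOpen (m := (⊤ : ℕ∞)) hU (by simp)).contDiffAt
      (hU.mem_nhds hp)).differentiableAt (by simp)
  have hF : ∀ v w : ℝ × ℝ,
      fderiv ℝ (fun q => fderiv ℝ f q v) p w = fderiv ℝ (fderiv ℝ f) p w v := by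
    intro v w
    rw [fderiv_clm_apply hd (differentiableAt_const v)]
    simp
  have hy : pdy f =ᶠ[nhds p] fun q => fderiv ℝ f q (0, 1) := by
    filter_upwards [hU.mem_nhds hp] with q hq using pdy_eq_fderiv hU hf hq
  have hx : pdx f =ᶠ[nhds p] fun q => fderiv ℝ f q (1, 0) := by
    filter_upwards [hU.mem_nhds hp] with q hq using pdx_eq_fderiv hU hf hq
  rw [pdx_eq_fderiv hU (contDiffOn_pdy hU hf) hp, pdy_eq_fderiv hU (contDiffOn_pdx hU hf) hp,
    hy.fderiv_eq, hx.fderiv_eq, hF, hF]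
  exact ((hf.contDiffAt (hU.mem_nhds hp)).isSymmSndFDerivAt
    (by simpa using WithTop.coe_le_coe.2 (le_top : (2 : ℕ∞) ≤ ⊤))).eq _ _

end Calculus

/-- **Non-metrisability of Painlevé I.** For `A₀ = 6y² + x`, `A₁ = A₂ = A₃ = 0`, every
smooth solution of the Liouville linear system on a connected open `U` has `ψ₂ ≡ 0` and
`ψ₃ ≡ 0`; in particular `ψ₁ψ₃ − ψ₂²` vanishes identically. -/
theorem painleveI_not_metrisable (U : Set (ℝ × ℝ)) (hU : IsOpen U) (hUconn : IsConnected U)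
    (ψ1 ψ2 ψ3 : ℝ × ℝ → ℝ)
    (hψ1 : ContDiffOn ℝ (⊤ : ℕ∞) ψ1 U) (hψ2 : ContDiffOn ℝ (⊤ : ℕ∞) ψ2 U) (hψ3 : ContDiffOn ℝ (⊤ : ℕ∞) ψ3 U)
    (hsys : LiouvilleSystem U (fun q => 6 * q.2 ^ 2 + q.1) (fun _ => 0) (fun _ => 0)
      (fun _ => 0) ψ1 ψ2 ψ3) :
    (∀ q ∈ U, ψ2 q = 0 ∧ ψ3 q = 0) ∧
    ∀ q ∈ U, ψ1 q * ψ3 q - (ψ2 q) ^ 2 = 0 := by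
  have hx1 : ∀ q ∈ U, pdx ψ1 q = -2 * (6 * q.2 ^ 2 + q.1) * ψ2 q := fun q hq => by
    have := (hsys q hq).1
    linarith
  have hy3 : ∀ q ∈ U, pdy ψ3 q = 0 := fun q hq => by
    have := (hsys q hq).2.1
    linarith
  have hy1 : ∀ q ∈ U, pdy ψ1 q = -2 * (6 * q.2 ^ 2 + q.1) * ψ3 q - 2 * pdx ψ2 q :=
    fun q hq => by
      have := (hsys q hq).2.2.1
      linarith
  have hy2 : ∀ q ∈ U, pdy ψ2 q = -(1 / 2) * pdx ψ3 q := fun q hq => by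
    have := (hsys q hq).2.2.2
    linarith
  have hx2s := contDiffOn_pdx hU hψ2
  have hx3s := contDiffOn_pdx hU hψ3
  have hxx2s := contDiffOn_pdx hU hx2s
  have hy2s := contDiffOn_pdy hU hψ2
  have hxy2s := contDiffOn_pdx hU hy2s
  have hxxy2s := contDiffOn_pdx hU hxy2s
  have hxy3 : ∀ q ∈ U, pdy (pdx ψ3) q = 0 := fun q hq => by
    rw [← pdx_pdy_comm hU hψ3 hq]
    exact pdx_eq_zero hU hy3 hq
  have hyy2 : ∀ q ∈ U, pdy (pdy ψ2) q = 0 := fun q hq => by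
    rw [pdy_congr hU hy2 hq]
    have h := ((hasDerivAt_pdy hU hx3s hq).const_mul (-(1 / 2))).deriv
    rw [hxy3 q hq, mul_zero] at h
    exact h
  have hxxy2 : ∀ q ∈ U, pdy (pdx (pdx ψ2)) q = pdx (pdx (pdy ψ2)) q := fun q hq => by
    rw [← pdx_pdy_comm hU hx2s hq]
    exact pdx_congr hU (fun r hr => (pdx_pdy_comm hU hψ2 hr).symm) hq
  have hxxyy2 : ∀ q ∈ U, pdy (pdx (pdx (pdy ψ2))) q = 0 := fun q hq => by
    rw [← pdx_pdy_comm hU hxy2s hq]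
    refine pdx_eq_zero hU (fun r hr => ?_) hq
    rw [← pdx_pdy_comm hU hy2s hr]
    exact pdx_eq_zero hU hyy2 hr
  have hAx : ∀ q : ℝ × ℝ, HasDerivAt (fun t : ℝ => 6 * q.2 ^ 2 + t) 1 q.1 := fun q =>
    (hasDerivAt_id q.1).const_add _
  have hAy : ∀ q : ℝ × ℝ, HasDerivAt (fun t : ℝ => 6 * t ^ 2 + q.1) (12 * q.2) q.2 :=
    fun q => by
      have h := (((hasDerivAt_id q.2).pow 2).const_mul 6).add_const q.1
      refine h.congr_deriv ?_
      simp
      ring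
  -- Integrability condition: equality of the mixed derivatives of `ψ1`.
  have key : ∀ q ∈ U, 2 * pdx (pdx ψ2) q + 2 * ψ3 q
      + 3 * ((6 * q.2 ^ 2 + q.1) * pdx ψ3 q) - 24 * (q.2 * ψ2 q) = 0 := fun q hq => by
    have e1 : pdy (pdx ψ1) q = _ := (pdy_congr hU hx1 hq).trans
      (((hAy q).const_mul (-2)).mul (hasDerivAt_pdy hU hψ2 hq)).deriv
    have e2 : pdx (pdy ψ1) q = _ := (pdx_congr hU hy1 hq).trans
      ((((hAx q).const_mul (-2)).mul (hasDerivAt_pdx hU hψ3 hq)).sub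
        ((hasDerivAt_pdx hU hx2s hq).const_mul 2)).deriv
    have e3 := pdx_pdy_comm hU hψ1 hq
    rw [e1, e2, hy2 q hq] at e3
    linear_combination -e3
  have key1 : ∀ q ∈ U, 2 * pdx (pdx (pdy ψ2)) q + 48 * (q.2 * pdx ψ3 q) - 24 * ψ2 q = 0 :=
    fun q hq => by
      have h := ((((hasDerivAt_pdy hU hxx2s hq).const_mul 2).add
        ((hasDerivAt_pdy hU hψ3 hq).const_mul 2)).add
        (((hAy q).mul (hasDerivAt_pdy hU hx3s hq)).const_mul 3)).sub
        (((hasDerivAt_id q.2).mul (hasDerivAt_pdy hU hψ2 hq)).const_mul 24)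
      have e := h.deriv.symm.trans (pdy_eq_zero hU key hq)
      rw [hxxy2 q hq, hy3 q hq, hxy3 q hq, hy2 q hq] at e
      simp only [id_eq] at e
      linear_combination e
  have hx3 : ∀ q ∈ U, pdx ψ3 q = 0 := fun q hq => by
    have h := (((hasDerivAt_pdy hU hxxy2s hq).const_mul 2).add
      (((hasDerivAt_id q.2).mul (hasDerivAt_pdy hU hx3s hq)).const_mul 48)).sub
      ((hasDerivAt_pdy hU hψ2 hq).const_mul 24)
    have e := h.deriv.symm.trans (pdy_eq_zero hU key1 hq)
    rw [hxxyy2 q hq, hxy3 q hq, hy2 q hq] at e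
    linear_combination e / 60
  have hy2' : ∀ q ∈ U, pdy ψ2 q = 0 := fun q hq => by rw [hy2 q hq, hx3 q hq, mul_zero]
  have h2 : ∀ q ∈ U, ψ2 q = 0 := fun q hq => by
    have e := key1 q hq
    rw [pdx_eq_zero hU (fun r hr => pdx_eq_zero hU hy2' hr) hq, hx3 q hq] at e
    linarith
  have h3 : ∀ q ∈ U, ψ3 q = 0 := fun q hq => by
    have e := key q hq
    rw [pdx_eq_zero hU (fun r hr => pdx_eq_zero hU h2 hr) hq, hx3 q hq, h2 q hq] at e
    linarith
  refine ⟨fun q hq => ⟨h2 q hq, h3 q hq⟩, fun q hq => ?_⟩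
  rw [h2 q hq, h3 q hq]
  ring
end

section
/- The quartic polynomial q(t) = t⁴ − 11286t² − 850968t − 19529683 has a real root, and the three polynomials q(t), r(t) = 3t⁵ + 529t⁴ + 222t³ − 2131102t² − 103196849t − 1977900451, and s(t) = t³ − 213t² − 7849t − 19235 have no common root in ℂ. -/
/-- The quartic `q(t) = t⁴ − 11286t² − 850968t − 19529683` has a real root, and the three
polynomials `q`, `r`, `s` (the fifth- and sixth-order metrisability obstructions for the
family `y'' = c eˣ + e^{−x}(y')²`, in the variable `t = 48c − 11`) have no common complex
root. -/
theorem obstruction_polynomials_no_common_root :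
    (∃ t : ℝ, t ^ 4 - 11286 * t ^ 2 - 850968 * t - 19529683 = 0) ∧
    ¬ ∃ z : ℂ,
      (z ^ 4 - 11286 * z ^ 2 - 850968 * z - 19529683 = 0) ∧
      (3 * z ^ 5 + 529 * z ^ 4 + 222 * z ^ 3 - 2131102 * z ^ 2
        - 103196849 * z - 1977900451 = 0) ∧
      (z ^ 3 - 213 * z ^ 2 - 7849 * z - 19235 = 0) := by
  refine ⟨?_, ?_⟩
  · -- The quartic is negative at `0` and positive at `200`.
    have hc : ContinuousOn
        (fun t : ℝ => t ^ 4 - 11286 * t ^ 2 - 850968 * t - 19529683) (Set.Icc 0 200) := by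
      fun_prop
    obtain ⟨t, -, ht⟩ := intermediate_value_Icc (by norm_num) hc
      (show (0 : ℝ) ∈ Set.Icc _ _ by constructor <;> norm_num)
    exact ⟨t, ht⟩
  · rintro ⟨z, hq, -, hs⟩
    -- Already `q` and `s` are coprime over `ℚ`: the cofactors below are the Bézout
    -- coefficients from the Euclidean algorithm, with denominators cleared.
    have h : (253316765957120000 : ℂ) = 0 := by
      linear_combination (-7725845 * z ^ 2 + 1934077696 * z - 9427471235) * hq +
        (7725845 * z ^ 3 - 288472711 * z ^ 2 - 78570945473 * z - 3597673056717) * hs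
    norm_num at h
end

section
/- (Determinant lemma) Let ε^{ab} (a,b ∈ {0,1}) be the skew form with ε⁰⁰ = ε¹¹ = 0, ε⁰¹ = 1, ε¹⁰ = −1. Let P_a, Q_{ab}, R_c, S_{ca}, T_{cab}, U_{cd}, V_{cda}, X_{cdab} be real arrays with all indices in {0,1}, satisfying the symmetries Q_{ab} = Q_{ba}, T_{cab} = T_{cba}, U_{cd} = U_{dc}, V_{cda} = V_{dca}, X_{cdab} = X_{dcab} = X_{cdba}. Then the determinant of the 6×6 matrix whose first row is (0, P₀, P₁, Q₀₀, Q₀₁, Q₁₁), whose rows 2–3 are (R_c, S_{c0}, S_{c1}, T_{c00}, T_{c01}, T_{c11}) for c = 0, 1, and whose rows 4–6 are (U_{cd}, V_{cd0}, V_{cd1}, X_{cd00}, X_{cd01}, X_{cd11}) for (c,d) = (0,0), (0,1), (1,1), equals ε^{ab}ε^{cd}ε^{ef}ε^{gh}ε^{ij}ε^{kl}ε^{mn}ε^{pq}[ Q_{gi}S_{mp}T_{njk}U_{ac}V_{deq}X_{bfhl} − (1/6)P_pR_mS_{nq}X_{acgi}X_{behk}X_{dfjl} − (1/2)P_pS_{mq}T_{njl}U_{ce}X_{adgk}X_{bfhi}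 − (1/2)P_pT_{mgi}T_{njk}U_{ac}V_{deq}X_{bfhl} + (1/2)P_pR_mT_{ngi}V_{acq}X_{dejk}X_{bfhl} − (1/2)Q_{gi}R_mS_{np}V_{acq}X_{dejk}X_{bfhl} − (1/2)Q_{gi}R_mT_{njk}V_{acp}V_{deq}X_{bfhl} − (1/4)Q_{gi}S_{mp}S_{nq}U_{ac}X_{dejk}X_{bfhl} − (1/4)Q_{gi}T_{mjk}T_{nhl}U_{ac}V_{dep}V_{bfq} ], where all sixteen indices a, b, c, d, e, f, g, h, i, j, k, l, m, n, p, q are summed over {0,1}. -/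
/-!
Both sides are polynomials in the independent entries of the arrays, and they are compared
coefficient by coefficient. Since `ε` has only two nonzero entries, contracting a pair of indices
with it is the difference `F 0 1 - F 1 0` (`sum_eps2_mul`), so the sixteen-fold sum reduces to eight
nested differences, that is, 256 signed terms instead of `2 ^ 16`. The symmetries bring every entry
to the form, nondecreasing in each symmetric index pair, in which it appears in the matrix; after the Laplace expansion
of the determinant, what is left is an identity in a commutative ring.
-/

open Matrix

/-- The skew form `ε` in two dimensions: `ε⁰⁰ = ε¹¹ = 0`, `ε⁰¹ = 1`, `ε¹⁰ = −1`. -/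
def eps2 : Fin 2 → Fin 2 → ℝ := ![![0, 1], ![-1, 0]]

/-- Contraction of a two-index array with the skew form `ε`. -/
def skew (F : Fin 2 → Fin 2 → ℝ) : ℝ := F 0 1 - F 1 0

lemma sum_eps2_mul (F : Fin 2 → Fin 2 → ℝ) :
    ∑ a : Fin 2, ∑ b : Fin 2, eps2 a b * F a b = skew F := by
  simp [Fin.sum_univ_two, eps2, skew]
  ring

set_option maxHeartbeats 4000000 in
/-- **Determinant lemma.** The determinant of the `6 × 6` matrix built out of the arrays
`P, Q, R, S, T, U, V, X` equals the complete contraction with eight `ε`'s. -/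
theorem determinant_lemma
    (Pa : Fin 2 → ℝ) (Qa : Fin 2 → Fin 2 → ℝ) (Ra : Fin 2 → ℝ)
    (Sa : Fin 2 → Fin 2 → ℝ) (Ta : Fin 2 → Fin 2 → Fin 2 → ℝ)
    (Ua : Fin 2 → Fin 2 → ℝ) (Va : Fin 2 → Fin 2 → Fin 2 → ℝ)
    (Xa : Fin 2 → Fin 2 → Fin 2 → Fin 2 → ℝ)
    (hQ : ∀ a b, Qa a b = Qa b a)
    (hT : ∀ c a b, Ta c a b = Ta c b a)
    (hU : ∀ c d, Ua c d = Ua d c)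
    (hV : ∀ c d a, Va c d a = Va d c a)
    (hX1 : ∀ c d a b, Xa c d a b = Xa d c a b)
    (hX2 : ∀ c d a b, Xa c d a b = Xa c d b a) :
    (Matrix.of
      ![![0, Pa 0, Pa 1, Qa 0 0, Qa 0 1, Qa 1 1],
        ![Ra 0, Sa 0 0, Sa 0 1, Ta 0 0 0, Ta 0 0 1, Ta 0 1 1],
        ![Ra 1, Sa 1 0, Sa 1 1, Ta 1 0 0, Ta 1 0 1, Ta 1 1 1],
        ![Ua 0 0, Va 0 0 0, Va 0 0 1, Xa 0 0 0 0, Xa 0 0 0 1, Xa 0 0 1 1],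
        ![Ua 0 1, Va 0 1 0, Va 0 1 1, Xa 0 1 0 0, Xa 0 1 0 1, Xa 0 1 1 1],
        ![Ua 1 1, Va 1 1 0, Va 1 1 1, Xa 1 1 0 0, Xa 1 1 0 1, Xa 1 1 1 1]]).det
    =
    ∑ a : Fin 2, ∑ b : Fin 2, ∑ c : Fin 2, ∑ d : Fin 2, ∑ e : Fin 2, ∑ f : Fin 2,
    ∑ g : Fin 2, ∑ h : Fin 2, ∑ i : Fin 2, ∑ j : Fin 2, ∑ k : Fin 2, ∑ l : Fin 2,
    ∑ m : Fin 2, ∑ n : Fin 2, ∑ p : Fin 2, ∑ q : Fin 2,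
      eps2 a b * eps2 c d * eps2 e f * eps2 g h * eps2 i j * eps2 k l * eps2 m n * eps2 p q *
      (Qa g i * Sa m p * Ta n j k * Ua a c * Va d e q * Xa b f h l
        - (1/6) * Pa p * Ra m * Sa n q * Xa a c g i * Xa b e h k * Xa d f j l
        - (1/2) * Pa p * Sa m q * Ta n j l * Ua c e * Xa a d g k * Xa b f h i
        - (1/2) * Pa p * Ta m g i * Ta n j k * Ua a c * Va d e q * Xa b f h l
        + (1/2) * Pa p * Ra m * Ta n g i * Va a c q * Xa d e j k * Xa b f h l
        - (1/2) * Qa g i * Ra m * Sa n p * Va a c q * Xa d e j k * Xa b f h l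
        - (1/2) * Qa g i * Ra m * Ta n j k * Va a c p * Va d e q * Xa b f h l
        - (1/4) * Qa g i * Sa m p * Sa n q * Ua a c * Xa d e j k * Xa b f h l
        - (1/4) * Qa g i * Ta m j k * Ta n h l * Ua a c * Va d e p * Va b f q) := by
  -- Each symmetry, oriented so that it replaces the index pair `1 0` by `0 1`.
  have hQ' := hQ 1 0
  have hT' := fun c => hT c 1 0
  have hU' := hU 1 0
  have hV' := hV 1 0
  have hX1' := hX1 1 0
  have hX2' := fun c d => hX2 c d 1 0
  -- Move each factor `ε` out to its own pair of sums, then contract from the inside outwards.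
  simp only [mul_assoc, ← Finset.mul_sum, sum_eps2_mul]
  simp only [skew]
  simp only [hQ', hT', hU', hV', hX1', hX2']
  clear hQ hT hU hV hX1 hX2 hQ' hT' hU' hV' hX1' hX2'
  simp [Matrix.det_succ_row_zero, Fin.sum_univ_succ, Fin.succAbove, -one_div]
  ring
end

section
/- (Maximal rank of the higher-dimensional metrisability obstruction) Fix an integer n ≥ 3 and let all indices range over {1,…,n}. Define the array W^c_{abd} whose only nonzero components are: W¹_{121} = −W¹_{211} = 3(n²−n−1); W²_{122} = −W²_{212} = 3; W³_{123} = −W³_{213} = −(n−1)(2n+3); W^c_{12c} = −W^c_{21c} = −(n−1) for every c ≥ 4; W³_{132} = −W³_{312} = −(n²−n−3); W^c_{1c2} = −W^c_{c12} = n+2 for every c ≥ 4; W³_{231} = −W³_{321} = n(n+2); W^c_{2c1} = −W^c_{c21} = 2n+1 for every c ≥ 4. Then: (i) W has the symmetries of a projective Weyl tensor, namely W^c_{abd} = −W^c_{bad}, W^c_{[abd]} = 0 (vanishing total antisymmetrisation of the three lower indices), and the trace Σ_a W^a_{abd} = 0; and (ii) with Ξ^{cd}_{abef} := W^c_{ab(e}δ^d_{f)}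 + W^d_{ab(e}δ^c_{f)} + (2/n)δ^c_{[a}W^d_{b](ef)} + (2/n)δ^d_{[a}W^c_{b](ef)}, the linear map sending a symmetric 2-tensor σ^{ef} to the symmetric 2-tensor Σ_{e,f} Ξ^{cd}_{12ef}σ^{ef} is invertible; indeed in the standard basis of symmetric pairs it is represented by a diagonal matrix with nonzero diagonal entries. -/
/-!
The proof rests on writing `W` as a combination of products of Kronecker deltas (`Wten_eq`),
with three coefficient vectors `wC`, `pC`, `qC` indexed by the upper index. Antisymmetry is then
immediate, the Bianchi identity is the relation `wC - pC + qC = 0`, and the trace condition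
reduces to the values of the sums of `pC` and `qC`.

For symmetric `σ`, the contraction of `W^c_{12e}` with `σ^{ed}` is `wC c * σ^{cd}`, while
`W^d_{2ef} σ^{ef}` and `W^d_{1ef} σ^{ef}` are multiples of `σ^{1d}` and `σ^{2d}` respectively. In
`Ξ` they appear multiplied by `δ^c_1` and `δ^c_2`, so every term is a multiple of `σ^{cd}` and the
map is diagonal (`sum_Xi`) with entries `diagC`. These are rational functions of `n` that do not
vanish (`diagC_ne_zero`), hence division by them inverts the map.
-/

noncomputable section

/-- The particular tensor `W^c_{abd}` of the paper (indices written 0-based: the paper's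
index `i ∈ {1,…,n}` is `i−1` here, so "c ≥ 4" becomes `3 ≤ c.val`). -/
def Wten (n : ℕ) (c a b d : Fin n) : ℝ :=
  if c.val = 0 ∧ a.val = 0 ∧ b.val = 1 ∧ d.val = 0 then 3 * ((n : ℝ) ^ 2 - n - 1)
  else if c.val = 0 ∧ a.val = 1 ∧ b.val = 0 ∧ d.val = 0 then -(3 * ((n : ℝ) ^ 2 - n - 1))
  else if c.val = 1 ∧ a.val = 0 ∧ b.val = 1 ∧ d.val = 1 then 3
  else if c.val = 1 ∧ a.val = 1 ∧ b.val = 0 ∧ d.val = 1 then -3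
  else if c.val = 2 ∧ a.val = 0 ∧ b.val = 1 ∧ d.val = 2 then
    -(((n : ℝ) - 1) * (2 * n + 3))
  else if c.val = 2 ∧ a.val = 1 ∧ b.val = 0 ∧ d.val = 2 then
    ((n : ℝ) - 1) * (2 * n + 3)
  else if 3 ≤ c.val ∧ a.val = 0 ∧ b.val = 1 ∧ d = c then -((n : ℝ) - 1)
  else if 3 ≤ c.val ∧ a.val = 1 ∧ b.val = 0 ∧ d = c then (n : ℝ) - 1
  else if c.val = 2 ∧ a.val = 0 ∧ b.val = 2 ∧ d.val = 1 then -((n : ℝ) ^ 2 - n - 3)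
  else if c.val = 2 ∧ a.val = 2 ∧ b.val = 0 ∧ d.val = 1 then (n : ℝ) ^ 2 - n - 3
  else if 3 ≤ c.val ∧ a.val = 0 ∧ b = c ∧ d.val = 1 then (n : ℝ) + 2
  else if 3 ≤ c.val ∧ a = c ∧ b.val = 0 ∧ d.val = 1 then -((n : ℝ) + 2)
  else if c.val = 2 ∧ a.val = 1 ∧ b.val = 2 ∧ d.val = 0 then (n : ℝ) * (n + 2)
  else if c.val = 2 ∧ a.val = 2 ∧ b.val = 1 ∧ d.val = 0 then -((n : ℝ) * (n + 2))
  else if 3 ≤ c.val ∧ a.val = 1 ∧ b = c ∧ d.val = 0 then 2 * (n : ℝ) + 1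
  else if 3 ≤ c.val ∧ a = c ∧ b.val = 1 ∧ d.val = 0 then -(2 * (n : ℝ) + 1)
  else 0

/-- `W^d_{b(ef)}`, symmetrisation (weight `1/2`) of the last two lower indices. -/
def WtenSym (n : ℕ) (d b e f : Fin n) : ℝ :=
  (1/2) * (Wten n d b e f + Wten n d b f e)

/-- Kronecker delta on `Fin n`. -/
def kron (n : ℕ) (a b : Fin n) : ℝ := if a = b then 1 else 0

/-- `Ξ^{cd}_{abef}` built from `W` as in the statement. -/
def Xi (n : ℕ) (c d a b e f : Fin n) : ℝ :=
  (1/2) * (Wten n c a b e * kron n d f + Wten n c a b f * kron n d e)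
    + (1/2) * (Wten n d a b e * kron n c f + Wten n d a b f * kron n c e)
    + (2 / (n : ℝ)) * ((1/2) * (kron n c a * WtenSym n d b e f
        - kron n c b * WtenSym n d a e f))
    + (2 / (n : ℝ)) * ((1/2) * (kron n d a * WtenSym n c b e f
        - kron n d b * WtenSym n c a e f))

end

noncomputable section

/-- The coefficient `W^c_{12c}`. -/
def wC (n : ℕ) (c : Fin n) : ℝ :=
  if c.val = 0 then 3 * ((n : ℝ) ^ 2 - n - 1) else if c.val = 1 then 3
  else if c.val = 2 then -(((n : ℝ) - 1) * (2 * n + 3)) else -((n : ℝ) - 1)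

/-- The coefficient `W^c_{1c2}` for `c ≥ 3` (1-based). The first two values do not contribute
independently to `W`; they are chosen so that `wC - pC + qC = 0` for every `c`. -/
def pC (n : ℕ) (c : Fin n) : ℝ :=
  if c.val = 0 then 3 * ((n : ℝ) ^ 2 - n - 1) else if c.val = 1 then 0
  else if c.val = 2 then -((n : ℝ) ^ 2 - n - 3) else (n : ℝ) + 2

/-- The coefficient `W^c_{2c1}` for `c ≥ 3` (1-based). The first two values do not contribute
independently to `W`; they are chosen so that `wC - pC + qC = 0` for every `c`. -/
def qC (n : ℕ) (c : Fin n) : ℝ :=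
  if c.val = 0 then 0 else if c.val = 1 then -3
  else if c.val = 2 then (n : ℝ) * (n + 2) else 2 * (n : ℝ) + 1

/-- The first Bianchi identity, reduced to the coefficients. -/
lemma coeff_bianchi (n : ℕ) (c : Fin n) : pC n c = wC n c + qC n c := by
  unfold pC wC qC
  split_ifs <;> ring

lemma kron_comm (n : ℕ) (a b : Fin n) : kron n a b = kron n b a := by
  simp [kron, eq_comm]

/-- `W` as a combination of products of Kronecker deltas; `z`, `o` are the first two indices. -/
lemma Wten_eq (n : ℕ) (z o : Fin n) (hz : z.val = 0) (ho : o.val = 1) (c a b d : Fin n) :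
    Wten n c a b d =
      wC n c * kron n d c * (kron n a z * kron n b o - kron n b z * kron n a o)
      + pC n c * kron n d o * (kron n a z * kron n b c - kron n b z * kron n a c)
      + qC n c * kron n d z * (kron n a o * kron n b c - kron n b o * kron n a c) := by
  have kv : ∀ x y : Fin n, kron n x y = if x.val = y.val then 1 else 0 := by
    intro x y
    simp [kron, Fin.ext_iff]
  simp only [Wten, kv, hz, ho, Fin.ext_iff, wC, pC, qC]
  generalize c.val = c
  generalize a.val = a
  generalize b.val = b
  generalize d.val = d
  -- Both sides are determined by comparing `a`, `b` and `d` with `0`, `1` and `c`.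
  have tri : ∀ x : ℕ, x = 0 ∨ x = 1 ∨ (x ≠ 0 ∧ x ≠ 1) := by omega
  obtain rfl | rfl | rfl | hc : c = 0 ∨ c = 1 ∨ c = 2 ∨ 3 ≤ c := by omega
  · obtain rfl | rfl | ⟨ha, ha'⟩ := tri a <;> obtain rfl | rfl | ⟨hb, hb'⟩ := tri b <;>
      (simp [*]; try (split_ifs <;> simp))
  · obtain rfl | rfl | ⟨ha, ha'⟩ := tri a <;> obtain rfl | rfl | ⟨hb, hb'⟩ := tri b <;>
      (simp [*]; try (split_ifs <;> simp))
  · obtain rfl | rfl | ⟨ha, ha'⟩ := tri a <;> obtain rfl | rfl | ⟨hb, hb'⟩ := tri b <;>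
      simp [*] <;> split_ifs <;> first | rfl | omega | simp
  · have h0 : c ≠ 0 := by omega
    have h1 : c ≠ 1 := by omega
    have h2 : c ≠ 2 := by omega
    obtain rfl | rfl | ⟨ha, ha'⟩ := tri a <;> obtain rfl | rfl | ⟨hb, hb'⟩ := tri b <;>
      simp [*, h0.symm, h1.symm] <;> split_ifs <;> first | rfl | omega | simp

lemma Wten_antisymm (n : ℕ) (z o : Fin n) (hz : z.val = 0) (ho : o.val = 1)
    (c a b d : Fin n) : Wten n c a b d = -Wten n c b a d := by
  simp only [Wten_eq n z o hz ho]
  ring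

lemma Wten_bianchi (n : ℕ) (z o : Fin n) (hz : z.val = 0) (ho : o.val = 1)
    (c a b d : Fin n) :
    Wten n c a b d + Wten n c b d a + Wten n c d a b
      - Wten n c b a d - Wten n c a d b - Wten n c d b a = 0 := by
  simp only [Wten_eq n z o hz ho, coeff_bianchi]
  ring

lemma sum_pC (n : ℕ) (hn : 3 ≤ n) : ∑ c, pC n c = 3 * ((n : ℝ) ^ 2 - n - 1) - 3 := by
  obtain ⟨m, rfl⟩ := Nat.exists_eq_add_of_le' hn
  simp [Fin.sum_univ_succ, pC]
  ring

lemma sum_qC (n : ℕ) (hn : 3 ≤ n) : ∑ c, qC n c = 3 * ((n : ℝ) ^ 2 - n - 1) - 3 := by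
  obtain ⟨m, rfl⟩ := Nat.exists_eq_add_of_le' hn
  simp [Fin.sum_univ_succ, qC]
  ring

lemma sum_kron (n : ℕ) (g : Fin n → ℝ) (b : Fin n) : ∑ a, g a * kron n a b = g b := by
  simp [kron]

lemma Wten_trace (n : ℕ) (hn : 3 ≤ n) (z o : Fin n) (hz : z.val = 0) (ho : o.val = 1)
    (b d : Fin n) : ∑ a, Wten n a a b d = 0 := by
  have h : ∀ a, Wten n a a b d =
      (wC n a * kron n d a * kron n b o) * kron n a z
      - (wC n a * kron n d a * kron n b z) * kron n a o
      + (pC n a * kron n d o * kron n b a) * kron n a z - pC n a * (kron n d o * kron n b z)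
      + (qC n a * kron n d z * kron n b a) * kron n a o - qC n a * (kron n d z * kron n b o) := by
    intro a
    rw [Wten_eq n z o hz ho]
    simp only [kron, if_true]
    ring
  simp only [h, Finset.sum_add_distrib, Finset.sum_sub_distrib, sum_kron, ← Finset.sum_mul,
    sum_pC n hn, sum_qC n hn]
  simp only [wC, pC, qC, hz, ho]
  norm_num
  ring

/-- `Σ W^d_{2ef} σ^{ef}` equals `uC d * σ^{1d}` (1-based) for symmetric `σ`. -/
def uC (n : ℕ) (d : Fin n) : ℝ := if d.val = 1 then -3 else qC n d - wC n d

/-- `Σ W^d_{1ef} σ^{ef}` equals `vC d * σ^{2d}` (1-based) for symmetric `σ`. -/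
def vC (n : ℕ) (d : Fin n) : ℝ :=
  if d.val = 0 then 3 * ((n : ℝ) ^ 2 - n - 1) else wC n d + pC n d

/-- The diagonal entries of `σ^{ef} ↦ Ξ^{cd}_{12ef} σ^{ef}`, with `z`, `o` the first two
indices. -/
def diagC (n : ℕ) (z o c d : Fin n) : ℝ :=
  wC n c + wC n d
    + (1 / (n : ℝ)) * (kron n c z * uC n d - kron n c o * vC n d
        + kron n d z * uC n c - kron n d o * vC n c)

lemma Wten_zo (n : ℕ) (z o : Fin n) (hz : z.val = 0) (ho : o.val = 1) (c e : Fin n) :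
    Wten n c z o e = wC n c * kron n e c := by
  have hne : z ≠ o := by rintro rfl; omega
  have hp : pC n o = 0 := by simp [pC, ho]
  have hq : qC n z = 0 := by simp [qC, hz]
  rw [Wten_eq n z o hz ho]
  simp only [kron, hne, hne.symm, if_true, if_false]
  by_cases h1 : o = c
  · subst h1; simp [hp, hne]
  · by_cases h2 : z = c
    · subst h2; simp [hq, h1]
    · simp [h1, h2]

lemma sum_sum_kron (n : ℕ) (k : ℝ) (x y : Fin n) (σ : Fin n → Fin n → ℝ) :
    ∑ e, ∑ f, k * kron n e x * kron n f y * σ e f = k * σ x y := by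
  simp [kron]

lemma sum_Wten_o (n : ℕ) (z o : Fin n) (hz : z.val = 0) (ho : o.val = 1)
    (σ : Fin n → Fin n → ℝ) (hσ : ∀ i j, σ i j = σ j i) (d : Fin n) :
    ∑ e, ∑ f, Wten n d o e f * σ e f = uC n d * σ z d := by
  have hne : z ≠ o := by rintro rfl; omega
  have h : ∀ e f, Wten n d o e f * σ e f =
      (-wC n d) * kron n e z * kron n f d * σ e f
      + (-(pC n d * kron n o d)) * kron n e z * kron n f o * σ e f
      + qC n d * kron n e d * kron n f z * σ e f
      + (-(qC n d * kron n o d)) * kron n e o * kron n f z * σ e f := by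
    intro e f
    have h1 : kron n o z = 0 := by simp [kron, hne.symm]
    have h2 : kron n o o = 1 := by simp [kron]
    rw [Wten_eq n z o hz ho, h1, h2]
    ring
  simp only [h, Finset.sum_add_distrib, sum_sum_kron]
  rw [hσ o z, hσ d z]
  by_cases hd : o = d
  · subst hd
    simp [kron, uC, ho, pC, qC, wC]
  · have hd' : d.val ≠ 1 := fun h => hd (Fin.ext (by omega))
    simp only [kron, hd, uC, hd', if_false]
    ring

lemma sum_Wten_z (n : ℕ) (z o : Fin n) (hz : z.val = 0) (ho : o.val = 1)
    (σ : Fin n → Fin n → ℝ) (hσ : ∀ i j, σ i j = σ j i) (d : Fin n) :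
    ∑ e, ∑ f, Wten n d z e f * σ e f = vC n d * σ o d := by
  have hne : z ≠ o := by rintro rfl; omega
  have h : ∀ e f, Wten n d z e f * σ e f =
      wC n d * kron n e o * kron n f d * σ e f
      + pC n d * kron n e d * kron n f o * σ e f
      + (-(pC n d * kron n z d)) * kron n e z * kron n f o * σ e f
      + (-(qC n d * kron n z d)) * kron n e o * kron n f z * σ e f := by
    intro e f
    have h1 : kron n z o = 0 := by simp [kron, hne]
    have h2 : kron n z z = 1 := by simp [kron]
    rw [Wten_eq n z o hz ho, h1, h2]
    ring
  simp only [h, Finset.sum_add_distrib, sum_sum_kron]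
  rw [hσ z o, hσ d o]
  by_cases hd : z = d
  · subst hd
    simp [kron, vC, hz, pC, qC, wC]
  · have hd' : d.val ≠ 0 := fun h => hd (Fin.ext (by omega))
    simp only [kron, hd, vC, hd', if_false]
    ring

/-- Symmetrising the last two lower indices is invisible after contraction with a symmetric
tensor. -/
lemma sum_WtenSym (n : ℕ) (σ : Fin n → Fin n → ℝ) (hσ : ∀ i j, σ i j = σ j i)
    (d b : Fin n) :
    ∑ e, ∑ f, WtenSym n d b e f * σ e f = ∑ e, ∑ f, Wten n d b e f * σ e f := by
  have h : ∑ e, ∑ f, Wten n d b f e * σ e f = ∑ e, ∑ f, Wten n d b e f * σ e f := by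
    rw [Finset.sum_comm]
    refine Finset.sum_congr rfl fun e _ => Finset.sum_congr rfl fun f _ => ?_
    rw [hσ]
  have h' : ∀ e f, WtenSym n d b e f * σ e f =
      (1/2) * (Wten n d b e f * σ e f) + (1/2) * (Wten n d b f e * σ e f) := by
    intro e f
    unfold WtenSym
    ring
  simp only [h', Finset.sum_add_distrib, ← Finset.mul_sum, h]
  ring

lemma kron_mul_congr (n : ℕ) (a b : Fin n) (g : Fin n → ℝ) :
    kron n a b * g b = kron n a b * g a := by
  unfold kron
  split_ifs with h
  · rw [h]
  · simp

lemma sum_Xi (n : ℕ) (z o : Fin n) (hz : z.val = 0) (ho : o.val = 1)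
    (σ : Fin n → Fin n → ℝ) (hσ : ∀ i j, σ i j = σ j i) (c d : Fin n) :
    ∑ e, ∑ f, Xi n c d z o e f * σ e f = diagC n z o c d * σ c d := by
  have h : ∀ e f, Xi n c d z o e f * σ e f =
      (1/2 * wC n c) * kron n e c * kron n f d * σ e f
      + (1/2 * wC n c) * kron n e d * kron n f c * σ e f
      + (1/2 * wC n d) * kron n e d * kron n f c * σ e f
      + (1/2 * wC n d) * kron n e c * kron n f d * σ e f
      + (1 / (n : ℝ) * kron n c z) * (WtenSym n d o e f * σ e f)
      + (-(1 / (n : ℝ) * kron n c o)) * (WtenSym n d z e f * σ e f)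
      + (1 / (n : ℝ) * kron n d z) * (WtenSym n c o e f * σ e f)
      + (-(1 / (n : ℝ) * kron n d o)) * (WtenSym n c z e f * σ e f) := by
    intro e f
    unfold Xi
    simp only [Wten_zo n z o hz ho, kron_comm n d e, kron_comm n d f, kron_comm n c e,
      kron_comm n c f]
    ring
  simp only [h, Finset.sum_add_distrib, sum_sum_kron, ← Finset.mul_sum, sum_WtenSym n σ hσ,
    sum_Wten_o n z o hz ho σ hσ, sum_Wten_z n z o hz ho σ hσ]
  have k1 := kron_mul_congr n c z (fun x => σ x d)
  have k2 := kron_mul_congr n c o (fun x => σ x d)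
  have k3 := kron_mul_congr n d z (fun x => σ x c)
  have k4 := kron_mul_congr n d o (fun x => σ x c)
  simp only [hσ d c] at k1 k2 k3 k4 ⊢
  unfold diagC
  linear_combination (1 / (n : ℝ)) * uC n d * k1 - (1 / (n : ℝ)) * vC n d * k2
    + (1 / (n : ℝ)) * uC n c * k3 - (1 / (n : ℝ)) * vC n c * k4

lemma diagC_comm (n : ℕ) (z o c d : Fin n) : diagC n z o c d = diagC n z o d c := by
  unfold diagC
  ring

lemma diagC_ne_zero (n : ℕ) (hn : 3 ≤ n) (z o : Fin n) (hz : z.val = 0) (ho : o.val = 1)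
    (c d : Fin n) : diagC n z o c d ≠ 0 := by
  have hn3 : (3 : ℝ) ≤ n := by exact_mod_cast hn
  have hn0 : (n : ℝ) ≠ 0 := by positivity
  have kv : ∀ x y : Fin n, kron n x y = if x.val = y.val then 1 else 0 := by
    intro x y
    simp [kron, Fin.ext_iff]
  have key : ∀ x : ℝ, n * x ≠ 0 → x ≠ 0 := fun x h hx => h (by rw [hx, mul_zero])
  apply key
  -- As a polynomial in `y = n - 3 ≥ 0`, each entry is seen to have a definite sign.
  obtain ⟨y, hx⟩ : ∃ y : ℝ, (n : ℝ) = y + 3 := ⟨n - 3, by ring⟩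
  have hy0 : 0 ≤ y := by linarith
  -- The entry for the indices 2 and `c ≥ 4` (1-based) has the factor `n - 3`; it is nonzero
  -- because the existence of such an index `c` forces `n ≥ 4`.
  have hcases : ∀ i : Fin n, i.val = 0 ∨ i.val = 1 ∨ i.val = 2 ∨
      (1 ≤ y ∧ i.val ≠ 0 ∧ i.val ≠ 1 ∧ i.val ≠ 2) := by
    intro i
    by_cases h : 3 ≤ i.val
    · have : (4 : ℝ) ≤ n := by exact_mod_cast (by omega : 4 ≤ n)
      exact Or.inr (Or.inr (Or.inr ⟨by linarith, by omega, by omega, by omega⟩))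
    · omega
  simp only [diagC, mul_add, uC, vC, wC, pC, qC, kv, hz, ho]
  rw [← mul_assoc (n : ℝ) (1 / (n : ℝ)), mul_one_div_cancel hn0, one_mul]
  have hy2 : 0 ≤ y ^ 2 := by positivity
  have hy3 : 0 ≤ y ^ 3 := by positivity
  rw [hx]
  obtain hc | hc | hc | ⟨hc, c0, c1, c2⟩ := hcases c <;>
    obtain hd | hd | hd | ⟨hd, d0, d1, d2⟩ := hcases d <;>
    clear hcases key kv hx <;>
    intro h <;>
    simp only [*, if_true, if_false, one_ne_zero, OfNat.ofNat_ne_zero, OfNat.ofNat_ne_one,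
      OfNat.zero_ne_ofNat, OfNat.one_ne_ofNat, zero_ne_one] at h <;>
    ring_nf at h <;>
    nlinarith

end

/-- **Maximal rank of the higher-dimensional metrisability obstruction.** The explicit
tensor `W` has the symmetries of a projective Weyl tensor, and the linear map
`σ^{ef} ↦ Ξ^{cd}_{12ef}σ^{ef}` on symmetric 2-tensors is invertible; indeed it is
diagonal with nonzero diagonal entries in the standard basis of symmetric pairs. -/
theorem weyl_obstruction_maximal_rank (n : ℕ) (hn : 3 ≤ n) :
    (∀ c a b d : Fin n, Wten n c a b d = -Wten n c b a d) ∧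
    (∀ c a b d : Fin n,
      Wten n c a b d + Wten n c b d a + Wten n c d a b
        - Wten n c b a d - Wten n c a d b - Wten n c d b a = 0) ∧
    (∀ b d : Fin n, (∑ a : Fin n, Wten n a a b d) = 0) ∧
    (∀ τ : Fin n → Fin n → ℝ, (∀ i j, τ i j = τ j i) →
      ∃! σ : {σ : Fin n → Fin n → ℝ // ∀ i j, σ i j = σ j i},
        ∀ c d : Fin n,
          (∑ e : Fin n, ∑ f : Fin n,
            Xi n c d ⟨0, by omega⟩ ⟨1, by omega⟩ e f * σ.1 e f) = τ c d) ∧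
    (∃ lam : Fin n → Fin n → ℝ,
      (∀ c d, lam c d = lam d c) ∧ (∀ c d, lam c d ≠ 0) ∧
      ∀ σ : Fin n → Fin n → ℝ, (∀ i j, σ i j = σ j i) →
        ∀ c d : Fin n,
          (∑ e : Fin n, ∑ f : Fin n,
            Xi n c d ⟨0, by omega⟩ ⟨1, by omega⟩ e f * σ e f) = lam c d * σ c d) := by
  have hz : (⟨0, by omega⟩ : Fin n).val = 0 := rfl
  have ho : (⟨1, by omega⟩ : Fin n).val = 1 := rfl
  refine ⟨Wten_antisymm n _ _ hz ho, Wten_bianchi n _ _ hz ho, Wten_trace n hn _ _ hz ho,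
    fun τ hτ => ?_, diagC n ⟨0, by omega⟩ ⟨1, by omega⟩, diagC_comm n _ _,
    diagC_ne_zero n hn _ _ hz ho, sum_Xi n _ _ hz ho⟩
  refine ⟨⟨fun c d => τ c d / diagC n ⟨0, by omega⟩ ⟨1, by omega⟩ c d, fun i j => ?_⟩, ?_, ?_⟩
  · simp only [hτ i j, diagC_comm n _ _ i j]
  · intro c d
    rw [sum_Xi n _ _ hz ho _ (fun i j => by simp only [hτ i j, diagC_comm n _ _ i j])]
    exact mul_div_cancel₀ _ (diagC_ne_zero n hn _ _ hz ho c d)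
  · rintro ⟨σ, hσ⟩ h
    ext c d
    have := h c d
    rw [sum_Xi n _ _ hz ho σ hσ] at this
    exact (eq_div_iff (diagC_ne_zero n hn _ _ hz ho c d)).2 (by rw [mul_comm]; exact this)
end
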